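/- arXiv:2512.14497 — 2 statements merged into one kernel-verified Lean document; each statement's English description precedes it below -/
import Mathlib

section
/- Let n ≤ m, let (α_k)_{k∈Fin n} be an orthonormal basis of ℂ^n, (β_k)_{k∈Fin n} an orthonormal family in ℂ^m, λ : Fin n → ℝ with λ_k ≥ 0, and ψ := ∑_k √λ_k (α_k ⊗ β_k). Let H := A ⊗ I_m + I_n ⊗ B with A an n×n and B an m×m Hermitian matrix, and let Π be the measurement channel with projectors P_k := |α_k⟩⟨α_k|. Then the energy is unchanged by the measurement: ⟨ψ, H ψ⟩ = Tr(Π(|ψ⟩⟨ψ|) H). -/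
open scoped BigOperators ComplexOrder
open Matrix Kronecker

/-- Nondecreasing rearrangement of a finite real-valued family. -/
noncomputable def sortUp {ι : Type*} [Fintype ι] (f : ι → ℝ) : Fin (Fintype.card ι) → ℝ :=
  (f ∘ (Fintype.equivFin ι).symm) ∘ Tuple.sort (f ∘ (Fintype.equivFin ι).symm)

/-- Nonincreasing rearrangement of a finite real-valued family. -/
noncomputable def sortDown {ι : Type*} [Fintype ι] (f : ι → ℝ) : Fin (Fintype.card ι) → ℝ :=
  fun i => sortUp f i.rev

/-- Ergotropy ξ(ρ,H) = Tr(ρH) − inf over unitaries V of Tr(V ρ V* H). -/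
noncomputable def ergotropy {ι : Type*} [Fintype ι] [DecidableEq ι] (ρ H : Matrix ι ι ℂ) : ℝ :=
  ((ρ * H).trace).re -
    ⨅ V : Matrix.unitaryGroup ι ℂ,
      (((V : Matrix ι ι ℂ) * ρ * star (V : Matrix ι ι ℂ) * H).trace).re

/-- Passive energy E_p(ρ,H) = ∑ λ_i^↓ ε_i^↑. -/
noncomputable def passiveEnergy {ι : Type*} [Fintype ι] [DecidableEq ι]
    {ρ H : Matrix ι ι ℂ} (hρ : ρ.IsHermitian) (hH : H.IsHermitian) : ℝ :=
  ∑ i, sortDown hρ.eigenvalues i * sortUp hH.eigenvalues i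

/-- |u⟩⟨u|, the matrix with entries u_i conj(u_j). -/
noncomputable def ketbra {ι : Type*} (u : ι → ℂ) : Matrix ι ι ℂ := Matrix.vecMulVec u (star u)

/-- Tensor (Kronecker) product of vectors: (u ⊗ v)_(i,j) = u_i v_j. -/
noncomputable def vecTensor {ιa ιb : Type*} (u : ιa → ℂ) (v : ιb → ℂ) : ιa × ιb → ℂ :=
  fun p => u p.1 * v p.2

/-- The local measurement channel Π(ρ) = ∑_k (P_k ⊗ I) ρ (P_k ⊗ I). -/
noncomputable def pinch {ιa ιb K : Type*} [Fintype ιa] [Fintype ιb] [Fintype K]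
    [DecidableEq ιa] [DecidableEq ιb]
    (P : K → Matrix ιa ιa ℂ) (ρ : Matrix (ιa × ιb) (ιa × ιb) ℂ) :
    Matrix (ιa × ιb) (ιa × ιb) ℂ :=
  ∑ k, (P k ⊗ₖ (1 : Matrix ιb ιb ℂ)) * ρ * (P k ⊗ₖ (1 : Matrix ιb ιb ℂ))

/-- Local ergotropy ξ^l(ρ,H) = Tr(ρH) − inf over local unitaries U⊗V of Tr((U⊗V) ρ (U⊗V)* H). -/
noncomputable def localErgotropy {n m : ℕ}
    (ρ H : Matrix (Fin n × Fin m) (Fin n × Fin m) ℂ) : ℝ :=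
  ((ρ * H).trace).re -
    ⨅ W : Matrix.unitaryGroup (Fin n) ℂ × Matrix.unitaryGroup (Fin m) ℂ,
      ((((W.1 : Matrix (Fin n) (Fin n) ℂ) ⊗ₖ (W.2 : Matrix (Fin m) (Fin m) ℂ)) * ρ *
        star ((W.1 : Matrix (Fin n) (Fin n) ℂ) ⊗ₖ (W.2 : Matrix (Fin m) (Fin m) ℂ)) * H).trace).re

/-- First marginal (partial trace over the second factor). -/
noncomputable def marginalA {n m : ℕ} (ρ : Matrix (Fin n × Fin m) (Fin n × Fin m) ℂ) :
    Matrix (Fin n) (Fin n) ℂ :=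
  Matrix.of fun i i' => ∑ j, ρ (i, j) (i', j)

/-- Second marginal (partial trace over the first factor). -/
noncomputable def marginalB {n m : ℕ} (ρ : Matrix (Fin n × Fin m) (Fin n × Fin m) ℂ) :
    Matrix (Fin m) (Fin m) ℂ :=
  Matrix.of fun j j' => ∑ i, ρ (i, j) (i, j')

/-!
Absorb `√λ_k` into `β_k`, so that `ψ = ∑_k α_k ⊗ γ_k` with the `γ_k` pairwise orthogonal. The
projector `P_k ⊗ I` sends `ψ` to `α_k ⊗ γ_k`, so the measured energy is the sum of the energies
`⟨α_k ⊗ γ_k, H (α_k ⊗ γ_k)⟩`, and `⟨ψ, H ψ⟩` differs from it by the terms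
`⟨α_k ⊗ γ_k, H (α_l ⊗ γ_l)⟩` with `k ≠ l`. These vanish because each summand of `H` is the
identity on one factor, where the two vectors are orthogonal.
-/

section

variable {ι κ ιa ιb : Type*}

theorem vecTensor_smul (c : ℂ) (u : ιa → ℂ) (v : ιb → ℂ) :
    vecTensor u (c • v) = c • vecTensor u v := by
  ext p
  exact mul_left_comm _ _ _

theorem zero_vecTensor (v : ιb → ℂ) : vecTensor (0 : ιa → ℂ) v = 0 := by
  ext p
  exact zero_mul _

theorem kronecker_mulVec_vecTensor [Fintype ιa] [Fintype ιb] {κa κb : Type*}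
    (M : Matrix κa ιa ℂ) (N : Matrix κb ιb ℂ) (u : ιa → ℂ) (v : ιb → ℂ) :
    (M ⊗ₖ N) *ᵥ vecTensor u v = vecTensor (M *ᵥ u) (N *ᵥ v) := by
  ext p
  simp only [mulVec, dotProduct, vecTensor, kroneckerMap_apply, Fintype.sum_prod_type,
    Finset.sum_mul_sum, mul_mul_mul_comm]

theorem star_vecTensor_dotProduct_vecTensor [Fintype ιa] [Fintype ιb]
    (u u' : ιa → ℂ) (v v' : ιb → ℂ) :
    star (vecTensor u v) ⬝ᵥ vecTensor u' v' = (star u ⬝ᵥ u') * (star v ⬝ᵥ v') := by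
  simp only [dotProduct, vecTensor, Pi.star_apply, star_mul', Fintype.sum_prod_type,
    Finset.sum_mul_sum, mul_mul_mul_comm]

theorem isHermitian_ketbra (u : ι → ℂ) : (ketbra u).IsHermitian := by
  rw [ketbra, IsHermitian, conjTranspose_vecMulVec, star_star]

theorem ketbra_mulVec [Fintype ι] (u v : ι → ℂ) : ketbra u *ᵥ v = (star u ⬝ᵥ v) • u := by
  rw [ketbra, vecMulVec_mulVec, op_smul_eq_smul]

theorem mul_ketbra_mul_conjTranspose [Fintype ι] (M : Matrix κ ι ℂ) (u : ι → ℂ) :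
    M * ketbra u * Mᴴ = ketbra (M *ᵥ u) := by
  rw [ketbra, ketbra, mul_vecMulVec, vecMulVec_mul, star_mulVec]

theorem trace_ketbra_mul [Fintype ι] (u : ι → ℂ) (M : Matrix ι ι ℂ) :
    (ketbra u * M).trace = star u ⬝ᵥ M *ᵥ u := by
  rw [ketbra, vecMulVec_mul, trace_vecMulVec, dotProduct_comm, dotProduct_mulVec]

theorem pinch_ketbra [Fintype ιa] [Fintype ιb] [Fintype κ] [DecidableEq ιa] [DecidableEq ιb]
    {P : κ → Matrix ιa ιa ℂ} (hP : ∀ k, (P k).IsHermitian) (ψ : ιa × ιb → ℂ) :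
    pinch P (ketbra ψ) = ∑ k, ketbra ((P k ⊗ₖ (1 : Matrix ιb ιb ℂ)) *ᵥ ψ) := by
  simp only [pinch, ← mul_ketbra_mul_conjTranspose, conjTranspose_kronecker, (hP _).eq,
    conjTranspose_one]

theorem star_sum_dotProduct_mulVec_sum {R : Type*} [NonUnitalNonAssocSemiring R] [StarAddMonoid R]
    [Fintype ι] [Fintype κ] (M : Matrix ι ι R) {v : κ → ι → R}
    (hv : Pairwise fun k l => star (v k) ⬝ᵥ M *ᵥ v l = 0) :
    star (∑ k, v k) ⬝ᵥ M *ᵥ ∑ k, v k = ∑ k, star (v k) ⬝ᵥ M *ᵥ v k := by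
  rw [star_sum, sum_dotProduct]
  refine Finset.sum_congr rfl fun k _ => ?_
  rw [mulVec_sum, dotProduct_sum]
  exact Fintype.sum_eq_single k fun l hl => hv hl.symm

theorem ketbra_kronecker_one_mulVec_sum_vecTensor [Fintype ιa] [Fintype ιb] [Fintype κ]
    [DecidableEq ιb] [DecidableEq κ] {α : κ → ιa → ℂ}
    (hα : ∀ k l, star (α k) ⬝ᵥ α l = if k = l then 1 else 0) (γ : κ → ιb → ℂ) (k : κ) :
    (ketbra (α k) ⊗ₖ (1 : Matrix ιb ιb ℂ)) *ᵥ ∑ l, vecTensor (α l) (γ l) =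
      vecTensor (α k) (γ k) := by
  have hterm (l : κ) : (ketbra (α k) ⊗ₖ (1 : Matrix ιb ιb ℂ)) *ᵥ vecTensor (α l) (γ l) =
      if k = l then vecTensor (α k) (γ k) else 0 := by
    rw [kronecker_mulVec_vecTensor, ketbra_mulVec, one_mulVec, hα]
    split_ifs with hkl
    · rw [one_smul, hkl]
    · rw [zero_smul, zero_vecTensor]
  simp only [mulVec_sum, hterm, Finset.sum_ite_eq, Finset.mem_univ, if_true]

theorem star_vecTensor_dotProduct_noninteracting_mulVec_eq_zero [Fintype ιa] [Fintype ιb]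
    [DecidableEq ιa] [DecidableEq ιb] (A : Matrix ιa ιa ℂ) (B : Matrix ιb ιb ℂ)
    {u u' : ιa → ℂ} {v v' : ιb → ℂ} (hu : star u ⬝ᵥ u' = 0) (hv : star v ⬝ᵥ v' = 0) :
    star (vecTensor u v) ⬝ᵥ
      (A ⊗ₖ (1 : Matrix ιb ιb ℂ) + (1 : Matrix ιa ιa ℂ) ⊗ₖ B) *ᵥ vecTensor u' v' = 0 := by
  simp only [add_mulVec, kronecker_mulVec_vecTensor, one_mulVec, dotProduct_add,
    star_vecTensor_dotProduct_vecTensor, hu, hv, mul_zero, zero_mul, add_zero]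

theorem energy_invariant_pure_noninteracting_general [Fintype ιa] [Fintype ιb] [Fintype κ]
    [DecidableEq ιa] [DecidableEq ιb] [DecidableEq κ] (α : κ → ιa → ℂ) (γ : κ → ιb → ℂ)
    (hα : ∀ k l, star (α k) ⬝ᵥ α l = if k = l then 1 else 0)
    (hγ : Pairwise fun k l => star (γ k) ⬝ᵥ γ l = 0)
    (ψ : ιa × ιb → ℂ) (hψ : ψ = ∑ k, vecTensor (α k) (γ k))
    (A : Matrix ιa ιa ℂ) (B : Matrix ιb ιb ℂ) (H : Matrix (ιa × ιb) (ιa × ιb) ℂ)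
    (hH : H = A ⊗ₖ (1 : Matrix ιb ιb ℂ) + (1 : Matrix ιa ιa ℂ) ⊗ₖ B) :
    star ψ ⬝ᵥ H *ᵥ ψ = (pinch (fun k => ketbra (α k)) (ketbra ψ) * H).trace := by
  have hcross : Pairwise fun k l =>
      star (vecTensor (α k) (γ k)) ⬝ᵥ H *ᵥ vecTensor (α l) (γ l) = 0 := by
    intro k l hkl
    rw [hH]
    exact star_vecTensor_dotProduct_noninteracting_mulVec_eq_zero A B
      ((hα k l).trans (if_neg hkl)) (hγ hkl)
  calc star ψ ⬝ᵥ H *ᵥ ψ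
      = ∑ k, star (vecTensor (α k) (γ k)) ⬝ᵥ H *ᵥ vecTensor (α k) (γ k) := by
        rw [hψ, star_sum_dotProduct_mulVec_sum H hcross]
    _ = ((∑ k, ketbra (vecTensor (α k) (γ k))) * H).trace := by
        simp only [Finset.sum_mul, trace_sum, trace_ketbra_mul]
    _ = (pinch (fun k => ketbra (α k)) (ketbra ψ) * H).trace := by
        simp only [pinch_ketbra fun k => isHermitian_ketbra (α k), hψ,
          ketbra_kronecker_one_mulVec_sum_vecTensor hα]

end

/-- for a pure Schmidt state and a non-interacting Hamiltonian,
the energy is unchanged by the measurement. -/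
theorem energy_invariant_pure_noninteracting {n m : ℕ} (hnm : n ≤ m)
    (α : Fin n → Fin n → ℂ) (β : Fin n → Fin m → ℂ)
    (hα : ∀ k l, star (α k) ⬝ᵥ α l = if k = l then 1 else 0)
    (hβ : ∀ k l, star (β k) ⬝ᵥ β l = if k = l then 1 else 0)
    (lam : Fin n → ℝ) (hlam : ∀ k, 0 ≤ lam k)
    (ψ : Fin n × Fin m → ℂ)
    (hψ : ψ = ∑ k, ((Real.sqrt (lam k) : ℝ) : ℂ) • vecTensor (α k) (β k))
    {A : Matrix (Fin n) (Fin n) ℂ} {B : Matrix (Fin m) (Fin m) ℂ}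
    (hA : A.IsHermitian) (hB : B.IsHermitian)
    (H : Matrix (Fin n × Fin m) (Fin n × Fin m) ℂ)
    (hHdef : H = A ⊗ₖ (1 : Matrix (Fin m) (Fin m) ℂ)
        + (1 : Matrix (Fin n) (Fin n) ℂ) ⊗ₖ B) :
    star ψ ⬝ᵥ H.mulVec ψ = (pinch (fun k => ketbra (α k)) (ketbra ψ) * H).trace := by
  simp only [← vecTensor_smul] at hψ
  exact energy_invariant_pure_noninteracting_general α _ hα
    (fun k l hkl => by simp [hβ, hkl]) ψ hψ A B H hHdef
end

section
/- Let H be an N×N Hermitian matrix and let ρ, σ be N×N density matrices. Then ξ(ρ,H) − ξ(σ,H) = Tr((ρ − σ)H) + E_p(σ,H) − E_p(ρ,H). -/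
open scoped BigOperators ComplexOrder
open Matrix Kronecker

/-!
In eigenbases of `ρ` and `H`, the trace `Tr(V ρ V* H)` is `∑ᵢⱼ |Wᵢⱼ|² λⱼ εᵢ`, where the unitary
`W` is `V` expressed in these bases. The matrix `|Wᵢⱼ|²` is doubly stochastic, hence by Birkhoff's
theorem a convex combination of permutation matrices, and on permutation matrices the rearrangement
inequality bounds this sum below by the passive energy. Permutation matrices are themselves
unitary, so the bound is attained: the infimum in the ergotropy is the passive energy.
-/

section Rearrangement

variable {ι : Type*} [Fintype ι]

theorem monotone_sortUp (f : ι → ℝ) : Monotone (sortUp f) :=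
  Tuple.monotone_sort _

theorem antitone_sortDown (f : ι → ℝ) : Antitone (sortDown f) :=
  fun _ _ hij => monotone_sortUp f (Fin.rev_le_rev.2 hij)

theorem exists_equiv_sortUp_eq_comp (f : ι → ℝ) :
    ∃ b : Fin (Fintype.card ι) ≃ ι, sortUp f = f ∘ b :=
  ⟨(Tuple.sort _).trans (Fintype.equivFin ι).symm, rfl⟩

theorem exists_equiv_sortDown_eq_comp (f : ι → ℝ) :
    ∃ a : Fin (Fintype.card ι) ≃ ι, sortDown f = f ∘ a := by
  obtain ⟨b, hb⟩ := exists_equiv_sortUp_eq_comp f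
  exact ⟨Fin.revPerm.trans b, funext fun i => congrFun hb i.rev⟩

theorem isLeast_range_dotProduct_comp_perm (d e : ι → ℝ) :
    IsLeast (Set.range fun π : Equiv.Perm ι => e ⬝ᵥ (d ∘ π))
      (∑ i, sortDown d i * sortUp e i) := by
  obtain ⟨a, ha⟩ := exists_equiv_sortDown_eq_comp d
  obtain ⟨b, hb⟩ := exists_equiv_sortUp_eq_comp e
  have sum_reindexed (π : Equiv.Perm ι) : e ⬝ᵥ (d ∘ π) =
      ∑ k, sortDown d (((b.trans π).trans a.symm) k) * sortUp e k := by
    rw [dotProduct_comm, dotProduct, ← Equiv.sum_comp b, ha, hb]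
    simp
  refine ⟨⟨b.symm.trans a, ?_⟩, ?_⟩
  · exact (sum_reindexed _).trans (by simp)
  · rintro _ ⟨π, rfl⟩
    refine le_of_le_of_eq ?_ (sum_reindexed π).symm
    exact ((antitone_sortDown d).antivary (monotone_sortUp e)).sum_mul_le_sum_comp_perm_mul

theorem sum_sortDown_mul_sortUp_le_dotProduct_mulVec [DecidableEq ι] (d e : ι → ℝ)
    {M : Matrix ι ι ℝ} (hM : M ∈ doublyStochastic ℝ ι) :
    ∑ i, sortDown d i * sortUp e i ≤ e ⬝ᵥ (M *ᵥ d) := by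
  have convex_superlevel :
      Convex ℝ {M : Matrix ι ι ℝ | ∑ i, sortDown d i * sortUp e i ≤ e ⬝ᵥ (M *ᵥ d)} :=
    convex_halfSpace_ge
      ⟨fun A B => by rw [add_mulVec, dotProduct_add],
        fun c A => by rw [smul_mulVec, dotProduct_smul]⟩ _
  rw [← SetLike.mem_coe, doublyStochastic_eq_convexHull_permMatrix] at hM
  refine convexHull_min ?_ convex_superlevel hM
  rintro _ ⟨π, rfl⟩
  rw [Set.mem_ofPred_eq, permMatrix_mulVec]
  exact (isLeast_range_dotProduct_comp_perm d e).2 ⟨π, rfl⟩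

end Rearrangement

section Unitary

theorem map_norm_sq_permMatrix {n 𝕜 : Type*} [DecidableEq n] [RCLike 𝕜] (π : Equiv.Perm n) :
    (π.permMatrix 𝕜).map (‖·‖ ^ 2) = π.permMatrix ℝ := by
  ext i j
  by_cases h : π i = j <;> simp [PEquiv.toMatrix_apply, h]

variable {n : Type*} [Fintype n] [DecidableEq n]

theorem permMatrix_mem_unitaryGroup {R : Type*} [CommRing R] [StarRing R] (π : Equiv.Perm n) :
    π.permMatrix R ∈ unitaryGroup n R := by
  rw [mem_unitaryGroup_iff, star_eq_conjTranspose, conjTranspose_permMatrix, ← permMatrix_mul,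
    inv_mul_cancel, permMatrix_one]

variable {𝕜 : Type*} [RCLike 𝕜]

theorem sum_norm_sq_row_of_mem_unitaryGroup {U : Matrix n n 𝕜} (hU : U ∈ unitaryGroup n 𝕜)
    (i : n) : ∑ j, ‖U i j‖ ^ 2 = 1 := by
  have row_mul_star : ∑ j, U i j * star (U i j) = 1 := by
    simpa only [mul_apply, star_apply, one_apply_eq] using
      congrFun₂ (mem_unitaryGroup_iff.1 hU) i i
  have cast_eq : ((∑ j, ‖U i j‖ ^ 2 : ℝ) : 𝕜) = 1 := by
    simpa only [RCLike.star_def, RCLike.mul_conj, ← RCLike.ofReal_pow, ← RCLike.ofReal_sum]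
      using row_mul_star
  exact_mod_cast cast_eq

theorem map_norm_sq_mem_doublyStochastic {U : Matrix n n 𝕜} (hU : U ∈ unitaryGroup n 𝕜) :
    U.map (‖·‖ ^ 2) ∈ doublyStochastic ℝ n :=
  mem_doublyStochastic_iff_sum.2
    ⟨fun _ _ => sq_nonneg _, sum_norm_sq_row_of_mem_unitaryGroup hU,
      sum_norm_sq_row_of_mem_unitaryGroup (transpose_mem_unitaryGroup_iff.2 hU)⟩

theorem isLeast_range_dotProduct_map_norm_sq_mulVec (d e : n → ℝ) :
    IsLeast (Set.range fun W : unitaryGroup n 𝕜 =>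
        e ⬝ᵥ ((W : Matrix n n 𝕜).map (‖·‖ ^ 2) *ᵥ d))
      (∑ i, sortDown d i * sortUp e i) := by
  constructor
  · obtain ⟨π, hπ⟩ := (isLeast_range_dotProduct_comp_perm d e).1
    refine ⟨⟨π.permMatrix 𝕜, permMatrix_mem_unitaryGroup π⟩, ?_⟩
    simpa only [map_norm_sq_permMatrix, permMatrix_mulVec] using hπ
  · rintro _ ⟨W, rfl⟩
    exact sum_sortDown_mul_sortUp_le_dotProduct_mulVec d e (map_norm_sq_mem_doublyStochastic W.2)

end Unitary

section Trace

variable {m n 𝕜 : Type*} [Fintype m] [DecidableEq m] [Fintype n] [DecidableEq n] [RCLike 𝕜]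

theorem trace_mul_diagonal_mul_conjTranspose_mul_diagonal (W : Matrix m n 𝕜) (d : n → ℝ)
    (e : m → ℝ) :
    (W * diagonal (RCLike.ofReal ∘ d : n → 𝕜) * Wᴴ *
      diagonal (RCLike.ofReal ∘ e : m → 𝕜)).trace =
      ((e ⬝ᵥ (W.map (‖·‖ ^ 2) *ᵥ d) : ℝ) : 𝕜) := by
  have diag_entry (i : m) : (W * diagonal (RCLike.ofReal ∘ d : n → 𝕜) * Wᴴ) i i =
      (((W.map (‖·‖ ^ 2) *ᵥ d) i : ℝ) : 𝕜) := by
    rw [mul_apply, mulVec, dotProduct, RCLike.ofReal_sum]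
    refine Finset.sum_congr rfl fun j _ => ?_
    rw [mul_diagonal, conjTranspose_apply, mul_right_comm, RCLike.star_def, RCLike.mul_conj]
    simp
  simp only [trace, diag_apply, mul_diagonal, diag_entry, dotProduct, Function.comp_apply,
    RCLike.ofReal_sum, RCLike.ofReal_mul, mul_comm]

theorem trace_mul_mul_conjTranspose_mul_eq_dotProduct_eigenvalues {A : Matrix n n 𝕜}
    {B : Matrix m m 𝕜} (hA : A.IsHermitian) (hB : B.IsHermitian) (V : Matrix m n 𝕜) :
    (V * A * Vᴴ * B).trace =
      ((hB.eigenvalues ⬝ᵥ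
        ((star (hB.eigenvectorUnitary : Matrix m m 𝕜) * V *
          (hA.eigenvectorUnitary : Matrix n n 𝕜)).map (‖·‖ ^ 2) *ᵥ hA.eigenvalues) : ℝ) : 𝕜) := by
  rw [← trace_mul_diagonal_mul_conjTranspose_mul_diagonal]
  conv_lhs => rw [hA.spectral_theorem, hB.spectral_theorem]
  simp only [Unitary.conjStarAlgAut_apply, star_eq_conjTranspose, conjTranspose_mul,
    conjTranspose_conjTranspose, ← Matrix.mul_assoc]
  rw [trace_mul_comm]
  simp only [← Matrix.mul_assoc]

end Trace

section PassiveEnergy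

variable {ι : Type*} [Fintype ι] [DecidableEq ι] {H ρ σ : Matrix ι ι ℂ}

theorem isLeast_range_re_trace_unitary_conj_mul (hρ : ρ.IsHermitian) (hH : H.IsHermitian) :
    IsLeast (Set.range fun V : unitaryGroup ι ℂ =>
        (((V : Matrix ι ι ℂ) * ρ * star (V : Matrix ι ι ℂ) * H).trace).re)
      (passiveEnergy hρ hH) := by
  let toEigenbases : unitaryGroup ι ℂ ≃ unitaryGroup ι ℂ :=
    (Equiv.mulLeft (star hH.eigenvectorUnitary)).trans (Equiv.mulRight hρ.eigenvectorUnitary)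
  have re_trace_eq (V : unitaryGroup ι ℂ) :
      (((V : Matrix ι ι ℂ) * ρ * star (V : Matrix ι ι ℂ) * H).trace).re =
        hH.eigenvalues ⬝ᵥ
          ((toEigenbases V : Matrix ι ι ℂ).map (‖·‖ ^ 2) *ᵥ hρ.eigenvalues) := by
    rw [star_eq_conjTranspose, trace_mul_mul_conjTranspose_mul_eq_dotProduct_eigenvalues hρ hH]
    exact Complex.ofReal_re _
  have range_eq := toEigenbases.surjective.range_comp fun W : unitaryGroup ι ℂ =>
    hH.eigenvalues ⬝ᵥ ((W : Matrix ι ι ℂ).map (‖·‖ ^ 2) *ᵥ hρ.eigenvalues)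
  rw [funext re_trace_eq]
  exact range_eq ▸ isLeast_range_dotProduct_map_norm_sq_mulVec hρ.eigenvalues hH.eigenvalues

theorem ergotropy_eq_re_trace_sub_passiveEnergy (hρ : ρ.IsHermitian) (hH : H.IsHermitian) :
    ergotropy ρ H = ((ρ * H).trace).re - passiveEnergy hρ hH :=
  congrArg (((ρ * H).trace).re - ·) (isLeast_range_re_trace_unitary_conj_mul hρ hH).csInf_eq

theorem ergotropy_sub_eq_trace_add_passiveEnergy_general (hH : H.IsHermitian)
    (hρ : ρ.IsHermitian) (hσ : σ.IsHermitian) :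
    ergotropy ρ H - ergotropy σ H
      = (((ρ - σ) * H).trace).re + passiveEnergy hσ hH - passiveEnergy hρ hH := by
  rw [ergotropy_eq_re_trace_sub_passiveEnergy hρ hH, ergotropy_eq_re_trace_sub_passiveEnergy hσ hH,
    sub_mul, trace_sub, Complex.sub_re]
  ring

end PassiveEnergy

/-- ξ(ρ,H) − ξ(σ,H) = Tr((ρ−σ)H) + E_p(σ,H) − E_p(ρ,H). -/
theorem ergotropy_sub_eq_trace_add_passiveEnergy {ι : Type*} [Fintype ι] [DecidableEq ι]
    {H ρ σ : Matrix ι ι ℂ} (hH : H.IsHermitian)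
    (hρ : ρ.PosSemidef) (hρtr : ρ.trace = 1)
    (hσ : σ.PosSemidef) (hσtr : σ.trace = 1) :
    ergotropy ρ H - ergotropy σ H
      = (((ρ - σ) * H).trace).re
        + passiveEnergy hσ.isHermitian hH - passiveEnergy hρ.isHermitian hH :=
  ergotropy_sub_eq_trace_add_passiveEnergy_general hH hρ.isHermitian hσ.isHermitian
end
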